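/- arXiv:0705.2460 — 3 statements merged into one kernel-verified Lean document; each statement's English description precedes it below -/
import Mathlib

section
/- Mehler's formula: for 0 < t' < t and x, x' ∈ ℝ, the heat kernel satisfies p(t-t', x|x') = (2t)^{-1/2} e^{-x²/(4t) + x'²/(4t')} Σ_{n=0}^∞ (t'/t)^{n/2} φ_n(x/√(2t)) φ_n(x'/√(2t')), where φ_n(ζ) = (√π 2^n n!)^{-1/2} e^{-ζ²/2} H_n(ζ) are the Hermite orthonormal functions. -/
open Real

/-- The one-dimensional heat kernel `p(t, y | x)`. -/
noncomputable def heatKernel (t y x : ℝ) : ℝ :=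
  (Real.sqrt (2 * π * t))⁻¹ * Real.exp (-(y - x) ^ 2 / (2 * t))

/-- Hermite polynomials by the Rodrigues formula `H_n(x) = e^{x²}(-d/dx)^n e^{-x²}`. -/
noncomputable def hermiteH (n : ℕ) (x : ℝ) : ℝ :=
  (-1 : ℝ) ^ n * Real.exp (x ^ 2) * iteratedDeriv n (fun y => Real.exp (-(y ^ 2))) x

/-- Hermite orthonormal functions `φ_n`. -/
noncomputable def hermiteFun (n : ℕ) (x : ℝ) : ℝ :=
  (Real.sqrt (Real.sqrt π * 2 ^ n * n.factorial))⁻¹ * Real.exp (-(x ^ 2) / 2) * hermiteH n x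

/-!
Since `e^{-y²}` is the characteristic function of the centred Gaussian law with variance `2`,
differentiating it `n` times gives `H_n(x) = (-i)^n e^{x²} E[X^n e^{ixX}]`, with `X` of that law.
For independent copies `X` and `Y`, exchanging sum and expectation yields
`∑ ρ^n / (2^n n!) H_n(x) H_n(y) = e^{x² + y²} E[e^{-ρXY/2 + i(xX + yY)}]` for `|ρ| < 1`.
The right-hand side is an explicit Gaussian integral, and the heat kernel is the case
`ρ = √(s/t)` with `s < t` the two times.
-/

section GaussianIntegrals

open Complex MeasureTheory ProbabilityTheory
open scoped NNReal

theorem ofReal_mul_cpow {r : ℝ} (hr : 0 < r) {z : ℂ} (hz : z ≠ 0) (s : ℂ) :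
    ((r : ℂ) * z) ^ s = (r : ℂ) ^ s * z ^ s := by
  have hr' : (r : ℂ) ≠ 0 := ofReal_ne_zero.mpr hr.ne'
  rw [cpow_def_of_ne_zero (mul_ne_zero hr' hz), cpow_def_of_ne_zero hr', cpow_def_of_ne_zero hz,
    log_ofReal_mul hr hz, ofReal_log hr.le, add_mul, Complex.exp_add]

theorem ofReal_sqrt_eq_cpow {r : ℝ} (hr : 0 ≤ r) : ((√r : ℝ) : ℂ) = (r : ℂ) ^ (1 / 2 : ℂ) := by
  rw [Real.sqrt_eq_rpow, ofReal_cpow hr]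
  norm_num

variable {m : ℝ} {v : ℝ≥0}

theorem integral_cexp_quadratic_gaussianReal_eq_integral (hv : v ≠ 0) (a b c : ℂ) :
    ∫ z : ℝ, cexp (a * z ^ 2 + b * z + c) ∂gaussianReal m v =
      ((√(2 * π * v) : ℝ) : ℂ)⁻¹ * ∫ z : ℝ, cexp ((a - (2 * (v : ℂ))⁻¹) * z ^ 2 +
        (b + m / v) * z + (c - m ^ 2 / (2 * v))) := by
  have hvC : (v : ℂ) ≠ 0 := by exact_mod_cast hv
  simp_rw [integral_gaussianReal_eq_integral_smul hv, gaussianPDFReal, real_smul,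
    ← integral_const_mul]
  congr with z
  push_cast
  rw [mul_assoc, ← Complex.exp_add]
  congr 2
  field_simp
  ring

theorem integral_cexp_quadratic_gaussianReal {a : ℂ} (ha : 2 * v * a.re < 1) (b c : ℂ) :
    ∫ z : ℝ, cexp (a * z ^ 2 + b * z + c) ∂gaussianReal m v =
      ((1 - 2 * v * a)⁻¹) ^ (1 / 2 : ℂ) *
        cexp ((v * b ^ 2 + 2 * b * m + 2 * a * m ^ 2) / (2 * (1 - 2 * v * a)) + c) := by
  rcases eq_or_ne v 0 with rfl | hv
  · simp only [gaussianReal_zero_var, integral_dirac, NNReal.coe_zero, ofReal_zero, mul_zero,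
      zero_mul, sub_zero, inv_one, one_cpow, one_mul, mul_one, zero_add]
    ring_nf
  have hvC : (v : ℂ) ≠ 0 := by exact_mod_cast hv
  have hre : 0 < (1 - 2 * v * a).re := by simpa using ha
  have hD : 1 - 2 * v * a ≠ 0 := fun h => by simp [h] at hre
  have hcoef : a - (2 * (v : ℂ))⁻¹ = ((2 * v : ℝ)⁻¹ : ℝ) * -(1 - 2 * v * a) := by
    push_cast
    field_simp
    ring
  have hcoef_re : (a - (2 * (v : ℂ))⁻¹).re < 0 := by
    rw [hcoef, re_ofReal_mul, neg_re]
    exact mul_neg_of_pos_of_neg (by positivity) (neg_lt_zero.mpr hre)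
  have hpi : π / -(a - (2 * (v : ℂ))⁻¹) = (2 * π * v : ℝ) * (1 - 2 * v * a)⁻¹ := by
    rw [hcoef]
    push_cast
    field_simp
  have hsqrt : ((√(2 * π * v) : ℝ) : ℂ) ≠ 0 :=
    ofReal_ne_zero.mpr (Real.sqrt_pos.mpr (by positivity)).ne'
  rw [integral_cexp_quadratic_gaussianReal_eq_integral hv, integral_cexp_quadratic hcoef_re, hpi,
    ofReal_mul_cpow (by positivity) (inv_ne_zero hD), ← ofReal_sqrt_eq_cpow (by positivity),
    ← mul_assoc, inv_mul_cancel_left₀ hsqrt, hcoef]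
  push_cast
  congr 2
  field_simp
  ring

theorem integrable_cexp_quadratic_gaussianReal {a : ℂ} (ha : 2 * v * a.re < 1) (b c : ℂ) :
    Integrable (fun z : ℝ => cexp (a * z ^ 2 + b * z + c)) (gaussianReal m v) := by
  have hre : 0 < (1 - 2 * v * a).re := by simpa using ha
  have hD : 1 - 2 * v * a ≠ 0 := fun h => by simp [h] at hre
  -- A non-integrable function would have Bochner integral zero.
  by_contra hint
  simpa [integral_undef hint, hD, Complex.exp_ne_zero] using
    integral_cexp_quadratic_gaussianReal (m := m) ha b c

theorem integrable_exp_abs_mul_abs_gaussianReal_prod {r : ℝ} (hr₀ : 0 ≤ r) (hr : v * r < 1)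
    (a b : ℂ) :
    Integrable (fun p : ℝ × ℝ => rexp (r * (|p.1| * |p.2|)) * ‖cexp (a * p.1 + b * p.2)‖)
      ((gaussianReal 0 v).prod (gaussianReal 0 v)) := by
  have hgauss (d : ℂ) :
      Integrable (fun z : ℝ => rexp (r / 2 * z ^ 2) * ‖cexp (d * z)‖) (gaussianReal 0 v) := by
    have h := (integrable_cexp_quadratic_gaussianReal (m := 0) (v := v) (a := (r / 2 : ℝ))
      (by rw [ofReal_re]; linarith) d 0).norm
    refine h.congr (.of_forall fun z => ?_)
    simp only [add_zero, Complex.exp_add, norm_mul, ← ofReal_pow, ← ofReal_mul, norm_exp_ofReal]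
  refine ((hgauss a).mul_prod (hgauss b)).mono' (by fun_prop) (.of_forall fun p => ?_)
  have hyoung : r * (|p.1| * |p.2|) ≤ r / 2 * p.1 ^ 2 + r / 2 * p.2 ^ 2 := by
    nlinarith [two_mul_le_add_sq |p.1| |p.2|, sq_abs p.1, sq_abs p.2]
  rw [Real.norm_of_nonneg (by positivity), mul_mul_mul_comm, ← Real.exp_add, ← norm_mul,
    ← Complex.exp_add]
  gcongr

theorem integrable_cexp_bilinear_gaussianReal_prod {c : ℂ} (hc : v * ‖c‖ < 1) (a b : ℂ) :
    Integrable (fun p : ℝ × ℝ => cexp (c * (p.1 * p.2) + (a * p.1 + b * p.2)))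
      ((gaussianReal 0 v).prod (gaussianReal 0 v)) := by
  refine (integrable_exp_abs_mul_abs_gaussianReal_prod (norm_nonneg c) hc a b).mono' (by fun_prop)
    (.of_forall fun p => ?_)
  rw [Complex.exp_add, norm_mul]
  gcongr
  simpa using norm_exp_le_exp_norm (c * (p.1 * p.2))

theorem integral_cexp_bilinear_gaussianReal_prod {c : ℂ} (hc : v * ‖c‖ < 1) (a b : ℂ) :
    ∫ p : ℝ × ℝ, cexp (c * (p.1 * p.2) + (a * p.1 + b * p.2))
        ∂(gaussianReal 0 v).prod (gaussianReal 0 v) =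
      ((1 - (v * c) ^ 2)⁻¹) ^ (1 / 2 : ℂ) *
        cexp (v * (a ^ 2 + b ^ 2 + 2 * (v * c) * a * b) / (2 * (1 - (v * c) ^ 2))) := by
  have hvc : ‖(v * c) ^ 2‖ < 1 := by
    rw [norm_pow]
    exact pow_lt_one₀ (norm_nonneg _) (by simpa using hc) two_ne_zero
  have hD : 1 - (v * c) ^ 2 ≠ 0 := (isUnit_one_sub_of_norm_lt_one hvc).ne_zero
  have hinner (z : ℝ) : ∫ w : ℝ, cexp (c * (z * w) + (a * z + b * w)) ∂gaussianReal 0 v =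
      cexp (v * c ^ 2 / 2 * z ^ 2 + (v * c * b + a) * z + v * b ^ 2 / 2) := by
    have h := integral_cexp_quadratic_gaussianReal (m := 0) (v := v) (a := 0) (by simp)
      (c * z + b) (a * z)
    convert h using 1
    · congr with w
      ring_nf
    · simp only [ofReal_zero, mul_zero, sub_zero, inv_one, one_cpow, one_mul]
      ring_nf
  rw [integral_prod _ (integrable_cexp_bilinear_gaussianReal_prod hc a b)]
  simp only [hinner]
  have hcoef : 2 * v * (v * c ^ 2 / 2) = (v * c) ^ 2 := by ring
  rw [integral_cexp_quadratic_gaussianReal, hcoef]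
  · congr 2
    rw [ofReal_zero]
    simp only [mul_pow] at hD ⊢
    field_simp
    ring
  · have hre : 2 * v * (v * c ^ 2 / 2 : ℂ).re = ((v * c) ^ 2).re := by
      rw [← hcoef]
      simp
    rw [hre]
    exact (re_le_norm _).trans_lt hvc

theorem hasSum_pow_mul_integral_pow_mul_cexp_gaussianReal {c : ℂ} (hc : v * ‖c‖ < 1) (a b : ℂ) :
    HasSum (fun n : ℕ => c ^ n / n.factorial *
        ((∫ z : ℝ, z ^ n * cexp (a * z) ∂gaussianReal 0 v) *
          ∫ w : ℝ, w ^ n * cexp (b * w) ∂gaussianReal 0 v))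
      (((1 - (v * c) ^ 2)⁻¹) ^ (1 / 2 : ℂ) *
        cexp (v * (a ^ 2 + b ^ 2 + 2 * (v * c) * a * b) / (2 * (1 - (v * c) ^ 2)))) := by
  have hexp (p : ℝ × ℝ) : HasSum (fun n : ℕ => (‖c‖ * (|p.1| * |p.2|)) ^ n / n.factorial *
      ‖cexp (a * p.1 + b * p.2)‖)
      (rexp (‖c‖ * (|p.1| * |p.2|)) * ‖cexp (a * p.1 + b * p.2)‖) := by
    rw [Real.exp_eq_exp_ℝ]
    exact (NormedSpace.expSeries_div_hasSum_exp (‖c‖ * (|p.1| * |p.2|))).mul_right _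
  have hcexp (p : ℝ × ℝ) : HasSum (fun n : ℕ => (c * (p.1 * p.2)) ^ n / n.factorial *
      cexp (a * p.1 + b * p.2)) (cexp (c * (p.1 * p.2) + (a * p.1 + b * p.2))) := by
    have hseries : HasSum (fun n : ℕ => (c * (p.1 * p.2)) ^ n / n.factorial)
        (cexp (c * (p.1 * p.2))) := by
      rw [Complex.exp_eq_exp_ℂ]
      exact NormedSpace.expSeries_div_hasSum_exp _
    rw [Complex.exp_add (c * _)]
    exact hseries.mul_right _
  rw [← integral_cexp_bilinear_gaussianReal_prod hc]
  have h := hasSum_integral_of_dominated_convergence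
    (μ := (gaussianReal 0 v).prod (gaussianReal 0 v))
    (F := fun (n : ℕ) (p : ℝ × ℝ) =>
      (c * (p.1 * p.2)) ^ n / n.factorial * cexp (a * p.1 + b * p.2))
    (fun (n : ℕ) (p : ℝ × ℝ) => (‖c‖ * (|p.1| * |p.2|)) ^ n / n.factorial *
      ‖cexp (a * p.1 + b * p.2)‖) (fun n => by fun_prop)
    (fun n => .of_forall fun p => by simp) (.of_forall fun p => (hexp p).summable)
    (by simpa only [(hexp _).tsum_eq] using
      integrable_exp_abs_mul_abs_gaussianReal_prod (norm_nonneg c) hc a b)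
    (.of_forall hcexp)
  refine h.congr_fun fun n => ?_
  rw [← integral_prod_mul, ← integral_const_mul]
  congr with p
  rw [Complex.exp_add]
  ring

end GaussianIntegrals

section Mehler

open Complex MeasureTheory ProbabilityTheory
open scoped NNReal

theorem iteratedDeriv_clm_comp {𝕜 F G : Type*} [NontriviallyNormedField 𝕜]
    [NormedAddCommGroup F] [NormedSpace 𝕜 F] [NormedAddCommGroup G] [NormedSpace 𝕜 G]
    (g : F →L[𝕜] G) {f : 𝕜 → F} {x : 𝕜} {n : ℕ} (hf : ContDiffAt 𝕜 n f x) :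
    iteratedDeriv n (g ∘ f) x = g (iteratedDeriv n f x) := by
  simp [iteratedDeriv, g.iteratedFDeriv_comp_left hf le_rfl]

theorem hermiteH_eq_integral_gaussianReal (n : ℕ) (x : ℝ) :
    (hermiteH n x : ℂ) =
      (-I) ^ n * cexp (x ^ 2) * ∫ z : ℝ, z ^ n * cexp (I * x * z) ∂gaussianReal 0 2 := by
  have hchar : charFun (gaussianReal 0 2) = ofRealCLM ∘ fun y => rexp (-(y ^ 2)) := by
    ext y
    simp [charFun_gaussianReal]
  have hderiv : ((iteratedDeriv n (fun y => rexp (-(y ^ 2))) x : ℝ) : ℂ) =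
      I ^ n * ∫ z : ℝ, z ^ n * cexp (x * z * I) ∂gaussianReal 0 2 := by
    rw [← iteratedDeriv_charFun (memLp_id_gaussianReal' n (by simp)), hchar,
      iteratedDeriv_clm_comp _ (by fun_prop), ofRealCLM_apply]
  rw [hermiteH, ofReal_mul, hderiv, neg_pow I n]
  push_cast
  simp only [mul_comm I, mul_right_comm]
  ring

theorem hasSum_hermiteH_mul_hermiteH_complex {ρ : ℂ} (hρ : ‖ρ‖ < 1) (x y : ℝ) :
    HasSum (fun n : ℕ => ρ ^ n / (2 ^ n * n.factorial) * hermiteH n x * hermiteH n y)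
      (((1 - ρ ^ 2)⁻¹) ^ (1 / 2 : ℂ) *
        cexp ((2 * ρ * x * y - ρ ^ 2 * (x ^ 2 + y ^ 2)) / (1 - ρ ^ 2))) := by
  have hD : 1 - ρ ^ 2 ≠ 0 := by
    refine (isUnit_one_sub_of_norm_lt_one ?_).ne_zero
    rw [norm_pow]
    exact pow_lt_one₀ (norm_nonneg ρ) hρ two_ne_zero
  have hv : (((2 : ℝ≥0) : ℝ) : ℂ) * (-ρ / 2) = -ρ := by
    push_cast
    ring
  have hnorm : ((2 : ℝ≥0) : ℝ) * ‖-ρ / 2‖ < 1 := by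
    rw [norm_div, norm_neg, Complex.norm_ofNat, NNReal.coe_ofNat]
    linarith
  have h := (hasSum_pow_mul_integral_pow_mul_cexp_gaussianReal hnorm (I * x) (I * y)).mul_left
    (cexp (x ^ 2) * cexp (y ^ 2))
  have hexp : cexp ((2 * ρ * x * y - ρ ^ 2 * (x ^ 2 + y ^ 2)) / (1 - ρ ^ 2)) =
      cexp (x ^ 2) * cexp (y ^ 2) * cexp (((2 : ℝ≥0) : ℝ) *
        ((I * x) ^ 2 + (I * y) ^ 2 + 2 * -ρ * (I * x) * (I * y)) / (2 * (1 - (-ρ) ^ 2))) := by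
    rw [← Complex.exp_add, ← Complex.exp_add, neg_sq]
    congr 1
    push_cast
    field_simp
    linear_combination (2 * ρ * x * y - x ^ 2 - y ^ 2 : ℂ) * I_sq
  rw [hv] at h
  rw [hexp, mul_left_comm, ← neg_sq ρ]
  refine h.congr_fun fun n => ?_
  have hsign : (-I) ^ n * (-I) ^ n = (-1) ^ n := by
    rw [← mul_pow, neg_mul_neg, I_mul_I]
  have hpow : (-ρ / 2) ^ n = (-1) ^ n * ρ ^ n / 2 ^ n := by rw [div_pow, neg_pow]
  rw [hermiteH_eq_integral_gaussianReal, hermiteH_eq_integral_gaussianReal, hpow, ← hsign]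
  ring

theorem hasSum_hermiteH_mul_hermiteH {ρ : ℝ} (hρ : |ρ| < 1) (x y : ℝ) :
    HasSum (fun n : ℕ => ρ ^ n / (2 ^ n * n.factorial) * hermiteH n x * hermiteH n y)
      ((√(1 - ρ ^ 2))⁻¹ * rexp ((2 * ρ * x * y - ρ ^ 2 * (x ^ 2 + y ^ 2)) / (1 - ρ ^ 2))) := by
  have hD : 0 ≤ 1 - ρ ^ 2 := sub_nonneg.mpr ((sq_le_one_iff_abs_le_one ρ).mpr hρ.le)
  have h := hasSum_hermiteH_mul_hermiteH_complex (ρ := ρ) (by simpa using hρ) x y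
  rw [← hasSum_ofReal, ← Real.sqrt_inv, ofReal_mul, ofReal_sqrt_eq_cpow (inv_nonneg.mpr hD)]
  exact_mod_cast h

end Mehler

theorem hermiteFun_mul_hermiteFun (n : ℕ) (x y : ℝ) :
    hermiteFun n x * hermiteFun n y = (√π)⁻¹ * rexp (-(x ^ 2 + y ^ 2) / 2) *
      (hermiteH n x * hermiteH n y / (2 ^ n * n.factorial)) := by
  have hexp : rexp (-(x ^ 2 + y ^ 2) / 2) = rexp (-(x ^ 2) / 2) * rexp (-(y ^ 2) / 2) := by
    rw [← Real.exp_add]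
    ring_nf
  have hnorm : √(√π * 2 ^ n * n.factorial) ^ 2 = √π * 2 ^ n * n.factorial :=
    Real.sq_sqrt (by positivity)
  calc hermiteFun n x * hermiteFun n y
    _ = (√(√π * 2 ^ n * n.factorial) ^ 2)⁻¹ * (rexp (-(x ^ 2) / 2) * rexp (-(y ^ 2) / 2)) *
          (hermiteH n x * hermiteH n y) := by
      rw [hermiteFun, hermiteFun]
      ring
    _ = _ := by
      rw [hnorm, hexp]
      ring

theorem hasSum_hermiteFun_mul_hermiteFun {ρ : ℝ} (hρ : |ρ| < 1) (x y : ℝ) :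
    HasSum (fun n : ℕ => ρ ^ n * hermiteFun n x * hermiteFun n y)
      ((√(π * (1 - ρ ^ 2)))⁻¹ *
        rexp ((4 * ρ * x * y - (1 + ρ ^ 2) * (x ^ 2 + y ^ 2)) / (2 * (1 - ρ ^ 2)))) := by
  have hD : 1 - ρ ^ 2 ≠ 0 := (sub_pos.mpr ((sq_lt_one_iff_abs_lt_one ρ).mpr hρ)).ne'
  have hexp : rexp ((4 * ρ * x * y - (1 + ρ ^ 2) * (x ^ 2 + y ^ 2)) / (2 * (1 - ρ ^ 2))) =
      rexp (-(x ^ 2 + y ^ 2) / 2) *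
        rexp ((2 * ρ * x * y - ρ ^ 2 * (x ^ 2 + y ^ 2)) / (1 - ρ ^ 2)) := by
    rw [← Real.exp_add]
    congr 1
    field_simp
    ring
  have h := (hasSum_hermiteH_mul_hermiteH hρ x y).mul_left
    ((√π)⁻¹ * rexp (-(x ^ 2 + y ^ 2) / 2))
  rw [hexp, Real.sqrt_mul Real.pi_pos.le, mul_inv, mul_mul_mul_comm]
  refine h.congr_fun fun n => ?_
  rw [mul_assoc, hermiteFun_mul_hermiteFun]
  ring

theorem heatKernel_half_sq_sub_sq {s s' : ℝ} (hs' : 0 < s') (hs : s' < s) (x x' : ℝ) :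
    heatKernel ((s ^ 2 - s' ^ 2) / 2) x x' =
      s⁻¹ * rexp (-(x ^ 2) / (2 * s ^ 2) + x' ^ 2 / (2 * s' ^ 2)) * ((√(π * (1 - (s' / s) ^ 2)))⁻¹ *
        rexp ((4 * (s' / s) * (x / s) * (x' / s') -
          (1 + (s' / s) ^ 2) * ((x / s) ^ 2 + (x' / s') ^ 2)) / (2 * (1 - (s' / s) ^ 2)))) := by
  have hs₀ : 0 < s := hs'.trans hs
  have hsub : s ^ 2 - s' ^ 2 ≠ 0 := by nlinarith
  have hD : 1 - (s' / s) ^ 2 = (s ^ 2 - s' ^ 2) / s ^ 2 := by field_simp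
  have hsqrt : √(2 * π * ((s ^ 2 - s' ^ 2) / 2)) = s * √(π * (1 - (s' / s) ^ 2)) := by
    have hsq : 2 * π * ((s ^ 2 - s' ^ 2) / 2) = s ^ 2 * (π * (1 - (s' / s) ^ 2)) := by
      rw [hD]
      field_simp
    rw [hsq, Real.sqrt_mul (sq_nonneg s), Real.sqrt_sq hs₀.le]
  rw [heatKernel, hsqrt, mul_inv, mul_mul_mul_comm, ← Real.exp_add, hD]
  congr 2
  field_simp
  ring

/-- Mehler's formula for the heat kernel. -/
theorem mehler_formula (t t' x x' : ℝ) (ht' : 0 < t') (htt : t' < t) :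
    heatKernel (t - t') x x' =
      (Real.sqrt (2 * t))⁻¹ * Real.exp (-(x ^ 2) / (4 * t) + x' ^ 2 / (4 * t')) *
        ∑' n : ℕ, (t' / t) ^ ((n : ℝ) / 2) *
          hermiteFun n (x / Real.sqrt (2 * t)) * hermiteFun n (x' / Real.sqrt (2 * t')) := by
  have ht : 0 < t := ht'.trans htt
  have hs' : 0 < √(2 * t') := Real.sqrt_pos.mpr (by linarith)
  have hs : √(2 * t') < √(2 * t) := Real.sqrt_lt_sqrt (by linarith) (by linarith)
  have hρ : |√(2 * t') / √(2 * t)| < 1 := by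
    rw [abs_of_pos (div_pos hs' (hs'.trans hs)), div_lt_one (hs'.trans hs)]
    exact hs
  have hpow (n : ℕ) : (t' / t) ^ ((n : ℝ) / 2) = (√(2 * t') / √(2 * t)) ^ n := by
    rw [Real.rpow_div_two_eq_sqrt _ (by positivity), Real.rpow_natCast,
      ← Real.sqrt_div (by positivity), mul_div_mul_left _ _ two_ne_zero]
  simp_rw [hpow, (hasSum_hermiteFun_mul_hermiteFun hρ _ _).tsum_eq]
  convert heatKernel_half_sq_sub_sq hs' hs x x' using 2
  all_goals
    rw [Real.sq_sqrt (by linarith), Real.sq_sqrt (by linarith)]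
    ring_nf
end

section
/- Selberg-type Gaussian integral with Vandermonde to the first power: for t > 0, ∫_{W_N} e^{-|x|²/(2t)} h_N(x) dx = C'_N t^{N(N+1)/4}, where C'_N = 2^{N/2} ∏_{j=1}^N Γ(j/2). -/
open MeasureTheory Real

/-- The Vandermonde product `h_N(x) = ∏_{j<k}(x_k - x_j)`. -/
noncomputable def vandermonde (N : ℕ) (x : Fin N → ℝ) : ℝ :=
  ∏ j : Fin N, ∏ k ∈ Finset.Ioi j, (x k - x j)

/-!
With monic polynomials as entries, the Vandermonde product times a Gaussian is an alternant
`det (φ_j(x_i))`, and the last function `φ` can be chosen as an exact derivative `G'`. Inserting a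
point `u` into `y ∈ W_n` cuts `ℝ × W_n`, up to a null set, into `n + 1` copies of `W_{n+1}` indexed
by the rank of `u`, so the Laplace expansion along the last column becomes an integral over
`ℝ × W_n` signed by the rank of `u`. Integrating out `u` leaves the alternating sum
`2 ∑ (-1)^k G(y_k)` against a smaller alternant. Expanding that alternant along the row of `y_k`
produces the sign `(-1)^k` again, so the two cancel and the copies of `W_n` glue back to
`ℝ × W_{n-1}`. If the remaining functions are Hermite polynomials times a Gaussian, `G` is
orthogonal to all but the last of them. This is a recursion from `N + 2` to `N`, solved by the
duplication formula for `Γ`; by scaling, it suffices to treat `t = 2`, where `G φ_j` carries the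
Hermite weight `exp (-u² / 2)`.
-/

section WeylChamber

/-- The Weyl chamber `x_0 < ⋯ < x_{n-1}` of type `A` in `αⁿ`, the domain of integration. -/
abbrev weylChamber (α : Type*) [Preorder α] (n : ℕ) : Set (Fin n → α) :=
  {x | StrictMono x}

/-- The sign `(-1)^r`, where `r` is the number of entries of `y` below `u`; when `y` and `u`
together form a point of the Weyl chamber, this is the Laplace expansion sign of the position
of `u`. -/
def rankSign {α : Type*} [LinearOrder α] {n : ℕ} (y : Fin n → α) (u : α) : ℝ :=
  ∏ k, if y k < u then -1 else 1

variable {α : Type*} [LinearOrder α] {n : ℕ}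

lemma weylChamber_of_subsingleton [Subsingleton (Fin n)] : weylChamber α n = Set.univ :=
  Set.eq_univ_of_forall fun x => Subsingleton.strictMono x

lemma norm_rankSign (y : Fin n → α) (u : α) : ‖rankSign y u‖ = 1 := by
  rw [rankSign, norm_prod]
  exact Finset.prod_eq_one fun k _ => by split_ifs <;> simp

lemma rankSign_removeNth {x : Fin (n + 1) → α} (hx : StrictMono x) (i : Fin (n + 1)) :
    rankSign (i.removeNth x) (x i) = (-1) ^ (i : ℕ) := by
  have hlt (k : Fin n) : i.removeNth x k < x i ↔ (k : ℕ) < i := by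
    rw [Fin.removeNth_apply, hx.lt_iff_lt, Fin.succAbove_lt_iff_castSucc_lt, Fin.lt_def,
      Fin.val_castSucc]
  simp [rankSign, hlt, Finset.prod_ite, Fin.card_filter_val_lt, Nat.le_of_lt_succ i.2]

/-- Each entry of `y` at or above `u` contributes to the sum, and these entries are the last ones
of `y`. -/
lemma rankSign_eq_sum_indicator {y : Fin n → α} (hy : Monotone y) (u : α) :
    rankSign y u =
      (-1) ^ n + 2 * ∑ k : Fin n, (-1) ^ (k : ℕ) * (Set.Iic (y k)).indicator 1 u := by
  induction n with
  | zero => simp [rankSign]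
  | succ n ih =>
    have ih := ih (y := fun k => y k.castSucc) (hy.comp Fin.strictMono_castSucc.monotone)
    have hsucc : rankSign y u =
        rankSign (fun k : Fin n => y k.castSucc) u * if y (.last n) < u then -1 else 1 := by
      simp only [rankSign, Fin.prod_univ_castSucc]
    rw [hsucc, ih, Fin.sum_univ_castSucc]
    by_cases hu : y (.last n) < u
    · have hnot (k : Fin (n + 1)) : ¬ u ≤ y k := ((hy k.le_last).trans_lt hu).not_ge
      simp [hu, hnot, pow_succ]
    · simp [hu, not_lt.1 hu]
      ring

lemma eq_of_strictMono_insertNth {y : Fin n → α} {u : α} {i j : Fin (n + 1)}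
    (hi : StrictMono (i.insertNth u y : Fin (n + 1) → α))
    (hj : StrictMono (j.insertNth u y : Fin (n + 1) → α)) : i = j := by
  wlog hij : i ≤ j generalizing i j
  · exact (this hj hi (le_of_not_ge hij)).symm
  by_contra hne
  have hlt : i < j := hij.lt_of_ne hne
  obtain ⟨k, rfl⟩ := Fin.exists_castSucc_eq.2 (hlt.trans_le j.le_last).ne
  rw [Fin.strictMono_insertNth_iff] at hi hj
  exact lt_asymm (hi.2.2 k le_rfl) (hj.2.1 k hlt)

lemma exists_strictMono_insertNth {y : Fin n → α} (hy : StrictMono y) {u : α}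
    (hu : ∀ k, y k ≠ u) : ∃ i : Fin (n + 1), StrictMono (i.insertNth u y : Fin (n + 1) → α) := by
  obtain ⟨i, hi⟩ := (Set.toFinite {i : Fin (n + 1) | ∀ k, i ≤ k.castSucc → u < y k}).exists_minimal
    ⟨.last n, fun k hk => absurd hk k.castSucc_lt_last.not_ge⟩
  refine ⟨i, (Fin.strictMono_insertNth_iff ..).2 ⟨hy, fun k hk => ?_, hi.prop⟩⟩
  have hk' : ∃ l, k.castSucc ≤ l.castSucc ∧ ¬ u < y l := by
    simpa using hi.not_prop_of_lt hk
  obtain ⟨l, hkl, hl⟩ := hk'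
  exact (hy.monotone hkl).trans_lt ((not_lt.1 hl).lt_of_ne (hu l))

end WeylChamber

section Insertion

lemma integrable_comp_apply_removeNth {α E : Type*} [MeasurableSpace α]
    [NormedAddCommGroup E] {μ : Measure α} [SigmaFinite μ] {n : ℕ} (i : Fin (n + 1))
    {F : α × (Fin n → α) → E}
    (hF : Integrable F (μ.prod (.pi fun _ => μ))) :
    Integrable (fun x : Fin (n + 1) → α => F (x i, i.removeNth x)) (.pi fun _ => μ) :=
  (measurePreserving_piFinSuccAbove (fun _ => μ) i).integrable_comp_of_integrable hF

variable {α : Type*} [LinearOrder α] [TopologicalSpace α] [OrderClosedTopology α]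
  [MeasurableSpace α] [OpensMeasurableSpace α] {n : ℕ} {μ : Measure α}

lemma integral_rankSign_mul {y : Fin n → α} (hy : Monotone y) {f : α → ℝ} (hf : Integrable f μ)
    (hf₀ : ∫ u, f u ∂μ = 0) :
    ∫ u, rankSign y u * f u ∂μ =
      2 * ∑ k : Fin n, (-1) ^ (k : ℕ) * ∫ u in Set.Iic (y k), f u ∂μ := by
  have hind (k : Fin n) : ∫ u in Set.Iic (y k), f u ∂μ =
      ∫ u, (Set.Iic (y k)).indicator f u ∂μ := (integral_indicator measurableSet_Iic).symm
  have hint (k : Fin n) : Integrable ((Set.Iic (y k)).indicator f) μ :=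
    hf.indicator measurableSet_Iic
  calc ∫ u, rankSign y u * f u ∂μ
      = ∫ u, ((-1) ^ n * f u
          + 2 * ∑ k : Fin n, (-1) ^ (k : ℕ) * (Set.Iic (y k)).indicator f u) ∂μ := by
        refine integral_congr_ae (.of_forall fun u => ?_)
        simp only [rankSign_eq_sum_indicator hy, add_mul, mul_assoc, Finset.sum_mul,
          Set.indicator_apply, Pi.one_apply, ite_mul, one_mul, zero_mul]
    _ = 2 * ∑ k : Fin n, (-1) ^ (k : ℕ) * ∫ u in Set.Iic (y k), f u ∂μ := by
        rw [integral_add (hf.const_mul _)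
            ((integrable_finsetSum _ fun k _ => (hint k).const_mul _).const_mul _),
          integral_const_mul, hf₀, integral_const_mul,
          integral_finsetSum _ fun k _ => (hint k).const_mul _]
        simp only [integral_const_mul, hind, mul_zero, zero_add]

variable [SecondCountableTopology α]

lemma measurableSet_weylChamber : MeasurableSet (weylChamber α n) := by
  simp only [weylChamber, StrictMono, Set.ofPred_forall]
  exact .iInter fun i => .iInter fun j => .iInter fun _ =>
    measurableSet_lt (measurable_pi_apply i) (measurable_pi_apply j)

lemma measurable_rankSign : Measurable fun z : α × (Fin n → α) => rankSign z.2 z.1 :=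
  Finset.univ.measurable_fun_prod fun k _ =>
    .ite (measurableSet_lt ((measurable_pi_apply k).comp measurable_snd) measurable_fst)
      measurable_const measurable_const

variable {E : Type*} [NormedAddCommGroup E] [NormedSpace ℝ E]

lemma integrable_rankSign_smul {F : α × (Fin n → α) → E}
    {ν : Measure (α × (Fin n → α))} (hF : Integrable F ν) :
    Integrable (fun z => rankSign z.2 z.1 • F z) ν :=
  hF.bdd_smul 1 measurable_rankSign.aestronglyMeasurable
    (.of_forall fun _ => (norm_rankSign ..).le)

variable [SigmaFinite μ]

lemma setIntegral_weylChamber_succ (i : Fin (n + 1)) (F : α × (Fin n → α) → E) :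
    ∫ x in weylChamber α (n + 1), F (x i, i.removeNth x) ∂(.pi fun _ => μ) =
      ∫ z in (fun z => i.insertNth z.1 z.2) ⁻¹' weylChamber α (n + 1), F z
        ∂μ.prod (.pi fun _ => μ) := by
  have hpres := (measurePreserving_piFinSuccAbove (fun _ => μ) i).symm
  refine (hpres.setIntegral_preimage_emb (MeasurableEquiv.measurableEmbedding _) _ _).symm.trans ?_
  exact setIntegral_congr_fun (measurableSet_weylChamber.preimage hpres.measurable) fun z _ => by
    simp [Fin.insertNthEquiv]

variable [NullSingletonClass μ]

lemma ae_prod_pi_ne :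
    ∀ᵐ z : α × (Fin n → α) ∂μ.prod (.pi fun _ => μ), ∀ k, z.2 k ≠ z.1 := by
  refine ae_all_iff.2 fun k => ?_
  have hmeas : MeasurableSet {z : α × (Fin n → α) | z.2 k ≠ z.1} :=
    (measurableSet_eq_fun (f := fun z : α × (Fin n → α) => z.2 k) (by fun_prop) (by fun_prop)).compl
  exact (Measure.ae_prod_iff_ae_ae hmeas).2
    (.of_forall fun u => Measure.ae_eval_ne (fun _ => μ) k u)

variable (n μ) in
lemma univ_prod_weylChamber_ae_eq :
    (Set.univ ×ˢ weylChamber α n : Set (α × (Fin n → α)))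
      =ᵐ[μ.prod (.pi fun _ => μ)]
        ⋃ i : Fin (n + 1), (fun z => i.insertNth z.1 z.2) ⁻¹' weylChamber α (n + 1) := by
  filter_upwards [ae_prod_pi_ne] with z hz
  apply propext
  change z ∈ Set.univ ×ˢ _ ↔ z ∈ ⋃ i, _
  simp only [Set.mem_prod, Set.mem_univ, true_and, Set.mem_iUnion, Set.mem_preimage]
  refine ⟨fun hy => exists_strictMono_insertNth hy hz, fun ⟨i, hi⟩ => ?_⟩
  exact ((Fin.strictMono_insertNth_iff ..).1 hi).1

theorem sum_setIntegral_weylChamber_succ {F : α × (Fin n → α) → E}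
    (hF : IntegrableOn F (Set.univ ×ˢ weylChamber α n) (μ.prod (.pi fun _ => μ))) :
    ∑ i : Fin (n + 1), ∫ x in weylChamber α (n + 1), F (x i, i.removeNth x) ∂(.pi fun _ => μ) =
      ∫ z in Set.univ ×ˢ weylChamber α n, F z ∂μ.prod (.pi fun _ => μ) := by
  have hF' := hF.congr_set_ae (univ_prod_weylChamber_ae_eq n μ).symm
  simp_rw [setIntegral_weylChamber_succ]
  rw [setIntegral_congr_set (univ_prod_weylChamber_ae_eq n μ), integral_iUnion_fintype]
  · exact fun i =>
      (MeasurableEquiv.piFinSuccAbove (fun _ => α) i).symm.measurable measurableSet_weylChamber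
  · exact fun i j hij => Set.disjoint_left.2 fun z hi hj => hij (eq_of_strictMono_insertNth hi hj)
  · exact fun i => hF'.mono_set (Set.subset_iUnion_of_subset i subset_rfl)

theorem sum_neg_one_pow_smul_setIntegral_weylChamber_succ
    {F : α × (Fin n → α) → E}
    (hF : IntegrableOn F (Set.univ ×ˢ weylChamber α n) (μ.prod (.pi fun _ => μ))) :
    ∑ i : Fin (n + 1), (-1 : ℝ) ^ (i : ℕ) •
        ∫ x in weylChamber α (n + 1), F (x i, i.removeNth x) ∂(.pi fun _ => μ) =
      ∫ z in Set.univ ×ˢ weylChamber α n, rankSign z.2 z.1 • F z ∂μ.prod (.pi fun _ => μ) := by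
  rw [← sum_setIntegral_weylChamber_succ (integrable_rankSign_smul hF)]
  refine Finset.sum_congr rfl fun i _ => ?_
  rw [← integral_smul]
  refine setIntegral_congr_fun measurableSet_weylChamber fun x hx => ?_
  simp only [rankSign_removeNth hx]

variable {f : α → ℝ} {g : (Fin n → α) → ℝ}

theorem sum_setIntegral_weylChamber_mul (hf : Integrable f μ) (hg : Integrable g (.pi fun _ => μ)) :
    ∑ i : Fin (n + 1),
        ∫ x in weylChamber α (n + 1), f (x i) * g (i.removeNth x) ∂(.pi fun _ => μ) =
      (∫ u, f u ∂μ) * ∫ y in weylChamber α n, g y ∂(.pi fun _ => μ) := by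
  rw [sum_setIntegral_weylChamber_succ (F := fun z => f z.1 * g z.2)
    (hf.mul_prod hg).integrableOn, setIntegral_prod_mul, setIntegral_univ]

theorem sum_neg_one_pow_mul_setIntegral_weylChamber_mul (hf : Integrable f μ)
    (hf₀ : ∫ u, f u ∂μ = 0) (hg : Integrable g (.pi fun _ => μ)) :
    ∑ i : Fin (n + 1), (-1) ^ (i : ℕ) *
        ∫ x in weylChamber α (n + 1), f (x i) * g (i.removeNth x) ∂(.pi fun _ => μ) =
      2 * ∫ y in weylChamber α n,
        (∑ k : Fin n, (-1) ^ (k : ℕ) * ∫ u in Set.Iic (y k), f u ∂μ) * g y ∂(.pi fun _ => μ) := by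
  have hF : IntegrableOn (fun z : α × (Fin n → α) => f z.1 * g z.2)
    (Set.univ ×ˢ weylChamber α n) (μ.prod (.pi fun _ => μ)) := (hf.mul_prod hg).integrableOn
  have hsF := integrable_rankSign_smul hF
  rw [← Measure.prod_restrict, Measure.restrict_univ] at hsF
  calc _ = ∫ z in Set.univ ×ˢ weylChamber α n, rankSign z.2 z.1 • (f z.1 * g z.2)
          ∂μ.prod (.pi fun _ => μ) := sum_neg_one_pow_smul_setIntegral_weylChamber_succ hF
    _ = ∫ y in weylChamber α n, ∫ u, rankSign y u * f u * g y ∂μ ∂(.pi fun _ => μ) := by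
        rw [← Measure.prod_restrict, Measure.restrict_univ, integral_prod_symm _ hsF]
        simp only [smul_eq_mul, ← mul_assoc]
    _ = _ := by
        rw [← integral_const_mul]
        refine setIntegral_congr_fun measurableSet_weylChamber fun y hy => ?_
        rw [integral_mul_const, integral_rankSign_mul hy.monotone hf hf₀, mul_assoc]

end Insertion

section Alternant

/-- The alternant `det (φ_j(x_i))` of a family of functions `φ` at a tuple of points `x`; the
Vandermonde determinant is the case of monic polynomials of degrees `0, 1, …, n - 1`. -/
def alternant {α R : Type*} [CommRing R] {n : ℕ} (φ : Fin n → α → R) (x : Fin n → α) : R :=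
  (Matrix.of fun i j => φ j (x i)).det

section CommRing

variable {α R : Type*} [CommRing R] {n : ℕ}

lemma alternant_succ_row (φ : Fin (n + 1) → α → R) (x : Fin (n + 1) → α) (k : Fin (n + 1)) :
    alternant φ x = ∑ j : Fin (n + 1),
      (-1) ^ (k + j : ℕ) * φ j (x k) * alternant (j.removeNth φ) (k.removeNth x) :=
  Matrix.det_succ_row _ k

lemma alternant_succ_column_last (φ : Fin (n + 1) → α → R) (x : Fin (n + 1) → α) :
    alternant φ x = ∑ i : Fin (n + 1),
      (-1) ^ (i + n : ℕ) * φ (.last n) (x i) *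
        alternant (fun j => φ j.castSucc) (i.removeNth x) := by
  simp only [alternant, Matrix.det_succ_column _ (Fin.last n), Fin.val_last, Matrix.submatrix,
    Fin.succAbove_last, Matrix.of_apply, Fin.removeNth_apply]

lemma sum_neg_one_pow_mul_alternant (G : α → R) (φ : Fin (n + 1) → α → R) (x : Fin (n + 1) → α) :
    (∑ k : Fin (n + 1), (-1) ^ (k : ℕ) * G (x k)) * alternant φ x =
      ∑ j : Fin (n + 1), (-1) ^ (j : ℕ) * ∑ k : Fin (n + 1),
        (G (x k) * φ j (x k)) * alternant (j.removeNth φ) (k.removeNth x) := by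
  simp_rw [Finset.mul_sum, Finset.sum_mul]
  rw [Finset.sum_comm]
  refine Finset.sum_congr rfl fun k _ => ?_
  rw [alternant_succ_row φ x k, Finset.mul_sum]
  refine Finset.sum_congr rfl fun j _ => ?_
  have hk : (-1 : R) ^ (k : ℕ) * (-1) ^ (k : ℕ) = 1 := by rw [← mul_pow]; simp
  rw [pow_add]
  linear_combination ((-1) ^ (j : ℕ) * G (x k) * φ j (x k) *
    alternant (j.removeNth φ) (k.removeNth x)) * hk

end CommRing

lemma integrable_alternant {α R : Type*} [MeasurableSpace α] [NormedCommRing R] {μ : Measure α}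
    [SigmaFinite μ] {n : ℕ} {φ : Fin n → α → R} (hφ : ∀ j, Integrable (φ j) μ) :
    Integrable (alternant φ) (.pi fun _ => μ) := by
  have hdet (x : Fin n → α) :
      alternant φ x =
        ∑ σ : Equiv.Perm (Fin n), ((Equiv.Perm.sign σ : ℤ) : R) * ∏ i, φ (σ i) (x i) := by
    rw [alternant, ← Matrix.det_transpose, Matrix.det_apply']
    rfl
  simp_rw [funext hdet]
  exact integrable_finsetSum _ fun σ _ => (Integrable.fintype_prod fun i => hφ (σ i)).const_mul _

variable {α : Type*} [LinearOrder α] [TopologicalSpace α] [OrderClosedTopology α]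
  [SecondCountableTopology α] [MeasurableSpace α] [OpensMeasurableSpace α] {μ : Measure α}
  [SigmaFinite μ] [NullSingletonClass μ] {n : ℕ}

theorem setIntegral_weylChamber_alternant_succ {φ : Fin (n + 1) → α → ℝ}
    (hφ : ∀ j, Integrable (φ j) μ) (hlast : ∫ u, φ (.last n) u ∂μ = 0) :
    ∫ x in weylChamber α (n + 1), alternant φ x ∂(.pi fun _ => μ) =
      (-1) ^ n * (2 * ∫ y in weylChamber α n,
        (∑ k : Fin n, (-1) ^ (k : ℕ) * ∫ u in Set.Iic (y k), φ (.last n) u ∂μ) *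
          alternant (fun j => φ j.castSucc) y ∂(.pi fun _ => μ)) := by
  have hminor : Integrable (alternant fun j => φ j.castSucc) (.pi fun _ => μ) :=
    integrable_alternant fun j => hφ j.castSucc
  have hterm (i : Fin (n + 1)) := (integrable_comp_apply_removeNth i
    ((hφ (.last n)).mul_prod hminor)).integrableOn (s := weylChamber α (n + 1))
  rw [← sum_neg_one_pow_mul_setIntegral_weylChamber_mul (hφ _) hlast hminor, Finset.mul_sum]
  simp_rw [alternant_succ_column_last φ, mul_assoc]
  rw [integral_finsetSum _ fun i _ => (hterm i).const_mul _]
  refine Finset.sum_congr rfl fun i _ => ?_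
  rw [integral_const_mul, pow_add]
  ring

theorem setIntegral_weylChamber_sum_mul_alternant {G : α → ℝ} {φ : Fin (n + 1) → α → ℝ}
    (hφ : ∀ j, Integrable (φ j) μ) (hG : ∀ j, Integrable (fun u => G u * φ j u) μ) :
    ∫ y in weylChamber α (n + 1),
        (∑ k : Fin (n + 1), (-1) ^ (k : ℕ) * G (y k)) * alternant φ y ∂(.pi fun _ => μ) =
      ∑ j : Fin (n + 1), (-1) ^ (j : ℕ) * ((∫ u, G u * φ j u ∂μ) *
        ∫ z in weylChamber α n, alternant (j.removeNth φ) z ∂(.pi fun _ => μ)) := by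
  have hminor (j : Fin (n + 1)) : Integrable (alternant (j.removeNth φ)) (.pi fun _ => μ) :=
    integrable_alternant fun l => hφ (j.succAbove l)
  have hterm (j k : Fin (n + 1)) := (integrable_comp_apply_removeNth k
    ((hG j).mul_prod (hminor j))).integrableOn (s := weylChamber α (n + 1))
  simp_rw [sum_neg_one_pow_mul_alternant]
  rw [integral_finsetSum _ fun j _ => (integrable_finsetSum _ fun k _ => hterm j k).const_mul _]
  refine Finset.sum_congr rfl fun j _ => ?_
  rw [integral_const_mul, integral_finsetSum _ fun k _ => hterm j k,
    ← sum_setIntegral_weylChamber_mul (hG j) (hminor j)]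

theorem setIntegral_weylChamber_alternant_add_two {φ : Fin (n + 2) → α → ℝ} {G : α → ℝ}
    (hφ : ∀ j, Integrable (φ j) μ)
    (hG : ∀ j : Fin (n + 1), Integrable (fun u => G u * φ j.castSucc u) μ)
    (hlast : ∫ u, φ (.last (n + 1)) u ∂μ = 0)
    (hprimitive : ∀ a, ∫ u in Set.Iic a, φ (.last (n + 1)) u ∂μ = G a)
    (horth : ∀ j : Fin n, ∫ u, G u * φ j.castSucc.castSucc u ∂μ = 0) :
    ∫ x in weylChamber α (n + 2), alternant φ x ∂(.pi fun _ => μ) =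
      -2 * (∫ u, G u * φ (Fin.last n).castSucc u ∂μ) *
        ∫ z in weylChamber α n, alternant (fun j => φ j.castSucc.castSucc) z ∂(.pi fun _ => μ) := by
  have hminor : (Fin.last n).removeNth (fun j : Fin (n + 1) => φ j.castSucc) =
      fun j => φ j.castSucc.castSucc := by
    ext j
    simp [Fin.removeNth_apply]
  have hsign : (-1 : ℝ) ^ n * (-1) ^ n = 1 := by rw [← mul_pow]; simp
  rw [setIntegral_weylChamber_alternant_succ hφ hlast]
  simp_rw [hprimitive]
  rw [setIntegral_weylChamber_sum_mul_alternant (fun j => hφ j.castSucc) hG,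
    Fin.sum_univ_castSucc]
  simp only [horth, hminor, zero_mul, mul_zero, Finset.sum_const_zero, zero_add, Fin.val_last,
    pow_succ]
  linear_combination (-2 * (∫ u, G u * φ (Fin.last n).castSucc u ∂μ) *
    ∫ z in weylChamber α n, alternant (fun j => φ j.castSucc.castSucc) z ∂(.pi fun _ => μ)) * hsign

end Alternant

section GaussianPolynomial

open Polynomial

lemma integrable_eval_mul_exp_neg_mul_sq {b : ℝ} (hb : 0 < b) (p : ℝ[X]) :
    Integrable fun x => p.eval x * exp (-b * x ^ 2) := by
  induction p using Polynomial.induction_on' with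
  | add p q hp hq =>
    simp only [eval_add, add_mul]
    exact hp.add hq
  | monomial n a =>
    have hn : (-1 : ℝ) < n := by linarith [n.cast_nonneg (α := ℝ)]
    simpa [mul_assoc] using (integrable_rpow_mul_exp_neg_mul_sq hb hn).const_mul a

lemma hasDerivAt_eval_mul_exp_neg_mul_sq (b : ℝ) (p : ℝ[X]) (x : ℝ) :
    HasDerivAt (fun x => p.eval x * exp (-b * x ^ 2))
      ((derivative p - C (2 * b) * X * p).eval x * exp (-b * x ^ 2)) x := by
  refine ((p.hasDerivAt x).mul ((hasDerivAt_pow 2 x).const_mul (-b)).exp).congr_deriv ?_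
  simp only [eval_sub, eval_mul, eval_C, eval_X]
  ring

lemma integral_derivative_sub_mul_exp_neg_mul_sq {b : ℝ} (hb : 0 < b) (p : ℝ[X]) :
    ∫ x, (derivative p - C (2 * b) * X * p).eval x * exp (-b * x ^ 2) = 0 :=
  integral_eq_zero_of_hasDerivAt_of_integrable (hasDerivAt_eval_mul_exp_neg_mul_sq b p)
    (integrable_eval_mul_exp_neg_mul_sq hb _) (integrable_eval_mul_exp_neg_mul_sq hb _)

lemma integral_Iic_derivative_sub_mul_exp_neg_mul_sq {b : ℝ} (hb : 0 < b) (p : ℝ[X]) (a : ℝ) :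
    ∫ x in Set.Iic a, (derivative p - C (2 * b) * X * p).eval x * exp (-b * x ^ 2) =
      p.eval a * exp (-b * a ^ 2) := by
  have hint (q : ℝ[X]) := (integrable_eval_mul_exp_neg_mul_sq hb q).integrableOn (s := Set.Iic a)
  have hderiv (x : ℝ) := hasDerivAt_eval_mul_exp_neg_mul_sq b p x
  rw [integral_Iic_of_hasDerivAt_of_tendsto' (fun x _ => hderiv x) (hint _)
    (tendsto_zero_of_hasDerivAt_of_integrableOn_Iic (fun x _ => hderiv x) (hint _) (hint p)),
    sub_zero]

end GaussianPolynomial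

section Hermite

open Polynomial

lemma iterate_derivative_natDegree_of_monic {R : Type*} [Semiring R] {p : R[X]} (hp : p.Monic) :
    derivative^[p.natDegree] p = C (p.natDegree.factorial : R) := by
  rw [eq_C_of_natDegree_eq_zero (p := derivative^[p.natDegree] p)
    (by simpa using natDegree_iterate_derivative p p.natDegree), coeff_iterate_derivative]
  simp [hp.coeff_natDegree, Nat.descFactorial_self]

/-- The probabilists' Hermite polynomial `He_n` with real coefficients, orthogonal with respect to
the weight `exp (-x² / 2)`. -/
noncomputable def realHermite (n : ℕ) : ℝ[X] :=
  (hermite n).map (Int.castRingHom ℝ)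

lemma realHermite_succ (n : ℕ) :
    realHermite (n + 1) = X * realHermite n - derivative (realHermite n) := by
  simp [realHermite, hermite_succ, derivative_map]

lemma monic_realHermite (n : ℕ) : (realHermite n).Monic :=
  (hermite_monic n).map _

lemma natDegree_realHermite (n : ℕ) : (realHermite n).natDegree = n := by
  rw [realHermite, (hermite_monic n).natDegree_map, natDegree_hermite]

theorem integral_eval_mul_realHermite (p : ℝ[X]) (n : ℕ) :
    ∫ x, (p * realHermite n).eval x * exp (-(1 / 2) * x ^ 2) =
      ∫ x, (derivative^[n] p).eval x * exp (-(1 / 2) * x ^ 2) := by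
  induction n generalizing p with
  | zero => simp [realHermite]
  | succ n ih =>
    have hint (q : ℝ[X]) := integrable_eval_mul_exp_neg_mul_sq (b := 1 / 2) (by norm_num) q
    have hparts : p * realHermite (n + 1) = derivative p * realHermite n -
        (derivative (p * realHermite n) - C (2 * (1 / 2)) * X * (p * realHermite n)) := by
      rw [realHermite_succ, derivative_mul, mul_one_div_cancel two_ne_zero, C_1]
      ring
    rw [Function.iterate_succ_apply, ← ih, hparts]
    simp_rw [eval_sub (p := derivative p * _), sub_mul]
    rw [integral_sub (hint _) (hint _),
      integral_derivative_sub_mul_exp_neg_mul_sq (by norm_num), sub_zero]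

lemma integral_eval_mul_realHermite_eq_zero {p : ℝ[X]} {n : ℕ} (hp : p.natDegree < n) :
    ∫ x, (p * realHermite n).eval x * exp (-(1 / 2) * x ^ 2) = 0 := by
  rw [integral_eval_mul_realHermite, iterate_derivative_eq_zero hp]
  simp only [eval_zero, zero_mul, integral_zero]

lemma integral_realHermite_sq (n : ℕ) :
    ∫ x, (realHermite n * realHermite n).eval x * exp (-(1 / 2) * x ^ 2) =
      n.factorial * √(2 * π) := by
  have hderiv := iterate_derivative_natDegree_of_monic (monic_realHermite n)
  rw [natDegree_realHermite] at hderiv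
  rw [integral_eval_mul_realHermite, hderiv]
  simp_rw [eval_C]
  rw [integral_const_mul, integral_gaussian, div_div_eq_mul_div, div_one, mul_comm π]

/-- The Hermite polynomials of degrees `0, …, n`, followed by a monic polynomial of degree `n + 1`
whose product with `exp (-u² / 4)` is the derivative of `-2 He_n(u) exp (-u² / 4)`. -/
noncomputable def hermiteFamily (n : ℕ) : Fin (n + 2) → ℝ[X] :=
  Fin.snoc (fun j : Fin (n + 1) => realHermite j)
    (realHermite (n + 1) - derivative (realHermite n))

lemma hermiteFamily_castSucc (n : ℕ) (j : Fin (n + 1)) :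
    hermiteFamily n j.castSucc = realHermite j := by
  simp only [hermiteFamily, Fin.snoc_castSucc]

lemma hermiteFamily_last (n : ℕ) :
    hermiteFamily n (.last (n + 1)) = realHermite (n + 1) - derivative (realHermite n) := by
  simp only [hermiteFamily, Fin.snoc_last]

-- Here `1 / (2 * 2)` is the rate `1 / (2t)` of the Gaussian at `t = 2`.
lemma hermiteFamily_last_eq_derivative_sub (n : ℕ) :
    hermiteFamily n (.last (n + 1)) = derivative (C (-2) * realHermite n) -
      C (2 * (1 / (2 * 2))) * X * (C (-2) * realHermite n) := by
  have hC : C (2 * (1 / (2 * 2))) * C (-2) = (-1 : ℝ[X]) := by rw [← C_mul]; norm_num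
  have hneg : C (-2) = (-2 : ℝ[X]) := by rw [C_neg, C_ofNat]
  rw [hermiteFamily_last, realHermite_succ, derivative_C_mul]
  linear_combination (X * realHermite n) * hC - derivative (realHermite n) * hneg

lemma degree_derivative_realHermite_lt (n : ℕ) :
    (derivative (realHermite n)).degree < (realHermite (n + 1)).degree := by
  refine (degree_derivative_lt (monic_realHermite n).ne_zero).trans ?_
  exact degree_lt_degree (by simp only [natDegree_realHermite, n.lt_succ_self])

lemma monic_hermiteFamily (n : ℕ) (j : Fin (n + 2)) : (hermiteFamily n j).Monic := by
  induction j using Fin.lastCases with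
  | last =>
    rw [hermiteFamily_last]
    exact (monic_realHermite _).sub_of_left (degree_derivative_realHermite_lt n)
  | cast j => exact hermiteFamily_castSucc n j ▸ monic_realHermite j

lemma natDegree_hermiteFamily (n : ℕ) (j : Fin (n + 2)) : (hermiteFamily n j).natDegree = j := by
  induction j using Fin.lastCases with
  | last =>
    rw [hermiteFamily_last, natDegree_eq_of_degree_eq
      (degree_sub_eq_left_of_degree_lt (degree_derivative_realHermite_lt n)),
      natDegree_realHermite, Fin.val_last]
  | cast j => rw [hermiteFamily_castSucc, natDegree_realHermite, Fin.val_castSucc]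

lemma eval_realHermite_mul_exp_mul (m n : ℕ) (u : ℝ) :
    (C (-2) * realHermite n).eval u * exp (-(1 / (2 * 2)) * u ^ 2) *
        ((realHermite m).eval u * exp (-(1 / (2 * 2)) * u ^ 2)) =
      -2 * ((realHermite m * realHermite n).eval u * exp (-(1 / 2) * u ^ 2)) := by
  have hexp : exp (-(1 / 2) * u ^ 2) =
      exp (-(1 / (2 * 2)) * u ^ 2) * exp (-(1 / (2 * 2)) * u ^ 2) := by
    rw [← exp_add]
    ring_nf
  simp only [eval_mul, eval_C, hexp]
  ring

end Hermite

section GaussianVandermonde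

open Polynomial

lemma vandermonde_eq_det (N : ℕ) (x : Fin N → ℝ) :
    vandermonde N x = (Matrix.vandermonde x).det :=
  (Matrix.det_vandermonde x).symm

lemma alternant_eval_mul {N : ℕ} {q : Fin N → ℝ[X]} (hmonic : ∀ j, (q j).Monic)
    (hdeg : ∀ j, (q j).natDegree = j) (w : ℝ → ℝ) (x : Fin N → ℝ) :
    alternant (fun j u => (q j).eval u * w u) x = (∏ i, w (x i)) * vandermonde N x := by
  rw [vandermonde_eq_det, Matrix.det_eval_matrixOfPolynomials_eq_det_vandermonde x q hdeg hmonic,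
    ← Matrix.det_mul_column]
  simp_rw [alternant, mul_comm (w _)]
  rfl

/-- The integral of `exp (-|x|² / (2t))` times the Vandermonde product over the Weyl chamber, as a
function of the dimension `N` and the variance `t`. -/
noncomputable def gaussianVandermonde (N : ℕ) (t : ℝ) : ℝ :=
  ∫ x in weylChamber ℝ N, exp (-(∑ j, x j ^ 2) / (2 * t)) * vandermonde N x

lemma prod_exp_neg_mul_sq {ι : Type*} [Fintype ι] (t : ℝ) (x : ι → ℝ) :
    ∏ i, exp (-(1 / (2 * t)) * x i ^ 2) = exp (-(∑ i, x i ^ 2) / (2 * t)) := by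
  rw [← exp_sum, ← Finset.mul_sum, neg_mul, one_div_mul_eq_div, neg_div]

lemma gaussianVandermonde_eq_setIntegral_alternant {N : ℕ} {q : Fin N → ℝ[X]}
    (hmonic : ∀ j, (q j).Monic) (hdeg : ∀ j, (q j).natDegree = j) (t : ℝ) :
    gaussianVandermonde N t = ∫ x in weylChamber ℝ N,
      alternant (fun j u => (q j).eval u * exp (-(1 / (2 * t)) * u ^ 2)) x := by
  simp_rw [alternant_eval_mul hmonic hdeg, prod_exp_neg_mul_sq, gaussianVandermonde]

lemma gaussianVandermonde_of_subsingleton (N : ℕ) [Subsingleton (Fin N)] (t : ℝ) :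
    gaussianVandermonde N t = √(2 * π * t) ^ N := by
  have hvandermonde (x : Fin N → ℝ) : vandermonde N x = 1 :=
    Finset.prod_eq_one fun j _ => Finset.prod_eq_one fun k hk =>
      absurd (Subsingleton.elim j k) (Finset.mem_Ioi.1 hk).ne
  simp_rw [gaussianVandermonde, weylChamber_of_subsingleton, setIntegral_univ, hvandermonde,
    mul_one, ← prod_exp_neg_mul_sq]
  rw [integral_fintype_prod_volume_eq_pow fun u => exp (-(1 / (2 * t)) * u ^ 2), integral_gaussian,
    Fintype.card_fin, div_div_eq_mul_div, div_one]
  ring_nf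

lemma vandermonde_smul (N : ℕ) (c : ℝ) (x : Fin N → ℝ) :
    vandermonde N (c • x) = c ^ N.choose 2 * vandermonde N x := by
  have hcard : ∑ j : Fin N, (Finset.Ioi j).card = N.choose 2 := by
    simp_rw [Fin.card_Ioi]
    rw [Fin.sum_univ_eq_sum_range (fun j => N - 1 - j), Finset.sum_range_reflect (fun j => j),
      Finset.sum_range_id, Nat.choose_two_right]
  simp only [vandermonde, Pi.smul_apply, smul_eq_mul, ← mul_sub, Finset.prod_mul_distrib,
    Finset.prod_const, Finset.prod_pow_eq_pow_sum, hcard]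

open scoped Pointwise in
lemma smul_weylChamber {𝕜 : Type*} [Field 𝕜] [LinearOrder 𝕜] [IsStrictOrderedRing 𝕜] {c : 𝕜}
    (hc : 0 < c) (n : ℕ) : c • weylChamber 𝕜 n = weylChamber 𝕜 n := by
  ext x
  rw [Set.mem_smul_set_iff_inv_smul_mem₀ hc.ne']
  simp [StrictMono, inv_pos.2 hc]

theorem gaussianVandermonde_sq_mul (N : ℕ) {c : ℝ} (hc : 0 < c) (t : ℝ) :
    gaussianVandermonde N (c ^ 2 * t) = c ^ (N + 1).choose 2 * gaussianVandermonde N t := by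
  have hexp (x : Fin N → ℝ) : -(∑ j, (c • x) j ^ 2) / (2 * (c ^ 2 * t)) =
      -(∑ j, x j ^ 2) / (2 * t) := by
    simp_rw [Pi.smul_apply, smul_eq_mul, mul_pow, ← Finset.mul_sum]
    rw [mul_left_comm, ← mul_neg, mul_div_mul_left _ _ (by positivity)]
  have hscale := Measure.setIntegral_comp_smul_of_pos volume
    (fun x : Fin N → ℝ => exp (-(∑ j, x j ^ 2) / (2 * (c ^ 2 * t))) * vandermonde N x)
    (weylChamber ℝ N) hc
  simp_rw [hexp, vandermonde_smul, mul_left_comm _ (c ^ N.choose 2)] at hscale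
  rw [integral_const_mul, smul_weylChamber hc, Module.finrank_fin_fun, smul_eq_mul,
    eq_inv_mul_iff_mul_eq₀ (by positivity)] at hscale
  rw [gaussianVandermonde, ← hscale, Nat.choose_succ_succ', Nat.choose_one_right, pow_add,
    mul_assoc]
  rfl

theorem gaussianVandermonde_mul (N : ℕ) {s : ℝ} (hs : 0 < s) (t : ℝ) :
    gaussianVandermonde N (s * t) =
      s ^ ((N : ℝ) * ((N : ℝ) + 1) / 4) * gaussianVandermonde N t := by
  have hpow : √s ^ (N + 1).choose 2 = s ^ ((N : ℝ) * ((N : ℝ) + 1) / 4) := by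
    rw [sqrt_eq_rpow, ← rpow_mul_natCast hs.le, Nat.cast_choose_two]
    push_cast
    ring_nf
  rw [← hpow, ← gaussianVandermonde_sq_mul N (sqrt_pos.2 hs), sq_sqrt hs.le]

theorem gaussianVandermonde_add_two_two (n : ℕ) :
    gaussianVandermonde (n + 2) 2 = 4 * (n.factorial * √(2 * π)) * gaussianVandermonde n 2 := by
  let φ (j : Fin (n + 2)) (u : ℝ) : ℝ := (hermiteFamily n j).eval u * exp (-(1 / (2 * 2)) * u ^ 2)
  let G (u : ℝ) : ℝ := (C (-2) * realHermite n).eval u * exp (-(1 / (2 * 2)) * u ^ 2)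
  have hφ (j : Fin (n + 2)) : Integrable (φ j) := integrable_eval_mul_exp_neg_mul_sq (by norm_num) _
  have hφ_castSucc (j : Fin (n + 1)) :
      φ j.castSucc = fun u => (realHermite j).eval u * exp (-(1 / (2 * 2)) * u ^ 2) := by
    simp only [φ, hermiteFamily_castSucc]
  have hG_mul (j : Fin (n + 1)) (u : ℝ) : G u * φ j.castSucc u =
      -2 * ((realHermite j * realHermite n).eval u * exp (-(1 / 2) * u ^ 2)) := by
    rw [hφ_castSucc, eval_realHermite_mul_exp_mul]
  have hG (j : Fin (n + 1)) : Integrable fun u => G u * φ j.castSucc u := by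
    simp_rw [hG_mul]
    exact (integrable_eval_mul_exp_neg_mul_sq (by norm_num) _).const_mul _
  have hlast : ∫ u, φ (.last (n + 1)) u = 0 := by
    simp only [φ, hermiteFamily_last_eq_derivative_sub]
    exact integral_derivative_sub_mul_exp_neg_mul_sq (by norm_num) _
  have hprimitive (a : ℝ) : ∫ u in Set.Iic a, φ (.last (n + 1)) u = G a := by
    simp only [φ, hermiteFamily_last_eq_derivative_sub]
    exact integral_Iic_derivative_sub_mul_exp_neg_mul_sq (by norm_num) _ a
  have horth (j : Fin n) : ∫ u, G u * φ j.castSucc.castSucc u = 0 := by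
    simp_rw [hG_mul, integral_const_mul]
    rw [integral_eval_mul_realHermite_eq_zero (by simp [natDegree_realHermite]), mul_zero]
  rw [gaussianVandermonde_eq_setIntegral_alternant (monic_hermiteFamily n)
      (natDegree_hermiteFamily n),
    gaussianVandermonde_eq_setIntegral_alternant (fun j => monic_realHermite j)
      (fun j => natDegree_realHermite j), volume_pi, volume_pi,
    setIntegral_weylChamber_alternant_add_two hφ hG hlast hprimitive horth]
  simp_rw [hG_mul, integral_const_mul, hφ_castSucc, Fin.val_last, Fin.val_castSucc,
    integral_realHermite_sq]
  ring

/-- The constant `C'_N = 2^(N/2) ∏_{j=1}^N Γ(j/2)`. -/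
noncomputable def gaussianVandermondeConst (N : ℕ) : ℝ :=
  2 ^ ((N : ℝ) / 2) * ∏ j ∈ Finset.range N, Gamma (((j : ℝ) + 1) / 2)

lemma Gamma_half_mul_Gamma_half_succ (n : ℕ) :
    Gamma (((n : ℝ) + 1) / 2) * Gamma ((((n + 1 : ℕ) : ℝ) + 1) / 2) =
      n.factorial * (2 ^ n)⁻¹ * √π := by
  have hadd : (((n + 1 : ℕ) : ℝ) + 1) / 2 = ((n : ℝ) + 1) / 2 + 1 / 2 := by push_cast; ring
  rw [hadd, Gamma_mul_Gamma_add_half, mul_div_cancel₀ _ two_ne_zero, Gamma_nat_eq_factorial,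
    sub_add_cancel_right, rpow_neg two_pos.le, rpow_natCast]

lemma gaussianVandermondeConst_add_two (n : ℕ) :
    gaussianVandermondeConst (n + 2) =
      2 * (n.factorial * (2 ^ n)⁻¹ * √π) * gaussianVandermondeConst n := by
  have hpow : (2 : ℝ) ^ (((n + 2 : ℕ) : ℝ) / 2) = 2 * 2 ^ ((n : ℝ) / 2) := by
    rw [Nat.cast_add, add_div, rpow_add two_pos, Nat.cast_ofNat, div_self two_ne_zero, rpow_one,
      mul_comm]
  rw [gaussianVandermondeConst, gaussianVandermondeConst, Finset.prod_range_succ,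
    Finset.prod_range_succ, mul_assoc (∏ j ∈ Finset.range n, _), Gamma_half_mul_Gamma_half_succ,
    hpow]
  ring

lemma rpow_mul_add_one_div_four_add_two {t : ℝ} (ht : 0 < t) (n : ℕ) :
    t ^ (((n + 2 : ℕ) : ℝ) * (((n + 2 : ℕ) : ℝ) + 1) / 4) =
      t ^ n * t * √t * t ^ ((n : ℝ) * ((n : ℝ) + 1) / 4) := by
  have hexponent : ((n + 2 : ℕ) : ℝ) * (((n + 2 : ℕ) : ℝ) + 1) / 4 =
      n + 1 + 1 / 2 + (n : ℝ) * ((n : ℝ) + 1) / 4 := by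
    push_cast
    ring
  rw [hexponent, rpow_add ht, rpow_add ht, rpow_add ht, rpow_natCast, rpow_one,
    sqrt_eq_rpow]

theorem gaussianVandermonde_two (N : ℕ) :
    gaussianVandermonde N 2 =
      gaussianVandermondeConst N * 2 ^ ((N : ℝ) * ((N : ℝ) + 1) / 4) := by
  induction N using Nat.twoStepInduction with
  | zero => simp [gaussianVandermonde_of_subsingleton, gaussianVandermondeConst]
  | one =>
    have hexponent : (1 : ℝ) * (1 + 1) / 4 = 1 / 2 := by norm_num
    simp only [gaussianVandermonde_of_subsingleton, gaussianVandermondeConst, Nat.cast_one,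
      Finset.prod_range_one, Nat.cast_zero, zero_add, Gamma_one_half_eq, hexponent,
      ← sqrt_eq_rpow, pow_one]
    rw [sqrt_mul (by positivity), sqrt_mul two_pos.le]
  | more n ih _ =>
    have hpow : (2 : ℝ) ^ n ≠ 0 := by positivity
    rw [gaussianVandermonde_add_two_two, ih, gaussianVandermondeConst_add_two,
      rpow_mul_add_one_div_four_add_two two_pos, sqrt_mul two_pos.le]
    field_simp
    ring

end GaussianVandermonde

/-- Selberg-type Gaussian integral over the Weyl chamber with the Vandermonde
to the first power. -/
theorem gaussian_vandermonde_integral (N : ℕ) (t : ℝ) (ht : 0 < t) :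
    ∫ x in {x : Fin N → ℝ | StrictMono x},
        Real.exp (-(∑ j, x j ^ 2) / (2 * t)) * vandermonde N x =
      ((2 : ℝ) ^ ((N : ℝ) / 2) * ∏ j ∈ Finset.range N, Real.Gamma (((j : ℝ) + 1) / 2)) *
        t ^ ((N : ℝ) * ((N : ℝ) + 1) / 4) := by
  change gaussianVandermonde N t = gaussianVandermondeConst N * t ^ ((N : ℝ) * ((N : ℝ) + 1) / 4)
  calc gaussianVandermonde N t
      = gaussianVandermonde N (t / 2 * 2) := by rw [div_mul_cancel₀ t two_ne_zero]
    _ = (t / 2) ^ ((N : ℝ) * ((N : ℝ) + 1) / 4) *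
          (gaussianVandermondeConst N * 2 ^ ((N : ℝ) * ((N : ℝ) + 1) / 4)) := by
        rw [gaussianVandermonde_mul N (half_pos ht), gaussianVandermonde_two]
    _ = gaussianVandermondeConst N * t ^ ((N : ℝ) * ((N : ℝ) + 1) / 4) := by
        rw [mul_left_comm, ← mul_rpow (half_pos ht).le two_pos.le, div_mul_cancel₀ t two_ne_zero]
end

section
/- Heat semigroup of the Airy Hamiltonian: for t > 0 and x, y ∈ ℝ, ∫_ℝ Ai(x-λ) Ai(y-λ) e^{-λt} dλ = (4πt)^{-1/2} exp(-(x-y)²/(4t) - t(x+y)/2 + t³/12). -/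
open Real MeasureTheory Filter

/-!
Multiplication by `e^{-λs}` moves the contour of the Airy integral: for every `s > 0`,
`2π Ai(x) = ∫ e^{i(z³/3 + xz)} dz` over the line `Im z = s`, where the integrand decays like a
Gaussian, and `λ ↦ 2π Ai(x - λ) e^{-λs}` is the Fourier transform (in angular frequency) of that
integrand. With `s = t/2`, Parseval's formula turns the left-hand side into the integral of the
product of the integrands at `k + is` and `-k + is`; the cubic terms in `k` cancel and a Gaussian
integral remains. Moving the contour also gives the integrability that Fourier inversion needs:
going up from `s` bounds the transform by a decaying exponential as `λ → -∞`, going down does so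
as `λ → +∞`.
-/

section General

open Complex FourierTransform

theorem sqrt_pi_div (t : ℝ) : √(π / t) = 2 * π * (√(4 * π * t))⁻¹ := by
  have hfour : √4 = 2 := by rw [show (4 : ℝ) = 2 ^ 2 by norm_num, sqrt_sq zero_le_two]
  have hπ : π = √π * √π := (mul_self_sqrt pi_nonneg).symm
  rw [sqrt_div pi_nonneg, sqrt_mul (by positivity), sqrt_mul zero_le_four, hfour]
  nth_rw 2 [hπ]
  field_simp

theorem integrable_of_norm_le_exp {E : Type*} [NormedAddCommGroup E] {f : ℝ → E} {a b C D : ℝ}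
    (hf : AEStronglyMeasurable f) (ha : a < 0) (hb : 0 < b)
    (hC : ∀ w, 0 < w → ‖f w‖ ≤ C * rexp (a * w)) (hD : ∀ w ≤ 0, ‖f w‖ ≤ D * rexp (b * w)) :
    Integrable f := by
  have hleft : IntegrableOn f (Set.Iic 0) :=
    ((integrableOn_exp_mul_Iic hb 0).const_mul D).mono' hf.restrict
      (ae_restrict_of_forall_mem measurableSet_Iic hD)
  have hright : IntegrableOn f (Set.Ioi 0) :=
    ((integrableOn_exp_mul_Ioi ha 0).const_mul C).mono' hf.restrict
      (ae_restrict_of_forall_mem measurableSet_Ioi hC)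
  rw [← integrableOn_univ, ← Set.Iic_union_Ioi (a := (0 : ℝ))]
  exact hleft.union hright

theorem integral_fourier_mul_fourier {V : Type*} [NormedAddCommGroup V] [InnerProductSpace ℝ V]
    [FiniteDimensional ℝ V] [MeasurableSpace V] [BorelSpace V] {f g : V → ℂ}
    (hf : Integrable f) (hg : Integrable g) (hgc : Continuous g) (hg' : Integrable (𝓕 g)) :
    ∫ w, 𝓕 f w * 𝓕 g w = ∫ v, f v * g (-v) := by
  have inversion (v : V) : 𝓕 (𝓕 g) v = g (-v) := by
    rw [← congrFun (hgc.fourierInv_fourier_eq hg hg') (-v), fourierInv_eq_fourier_neg, neg_neg]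
  calc ∫ w, 𝓕 f w * 𝓕 g w
      = ∫ v, f v * 𝓕 (𝓕 g) v := by
        simpa using! VectorFourier.integral_fourierIntegral_smul_eq_flip (L := innerₗ V)
          continuous_fourierChar continuous_inner hf hg'
    _ = ∫ v, f v * g (-v) := by simp_rw [inversion]

theorem integral_cexp_I_mul_of_odd {θ : ℝ → ℝ} (hθ : Continuous θ) (hodd : θ.Odd) (R : ℝ) :
    ∫ k in -R..R, cexp (I * θ k) = 2 * ((∫ k in 0..R, Real.cos (θ k) : ℝ) : ℂ) := by
  have hint (a b : ℝ) : IntervalIntegrable (fun k ↦ cexp (I * θ k)) volume a b :=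
    Continuous.intervalIntegrable (by fun_prop) a b
  have hint' : IntervalIntegrable (fun k ↦ cexp (I * θ (-k))) volume 0 R :=
    Continuous.intervalIntegrable (by fun_prop) 0 R
  have hreflect : ∫ k in -R..0, cexp (I * θ k) = ∫ k in 0..R, cexp (I * θ (-k)) := by
    rw [intervalIntegral.integral_comp_neg fun k ↦ cexp (I * θ k), neg_zero]
  rw [← intervalIntegral.integral_add_adjacent_intervals (hint (-R) 0) (hint 0 R), hreflect,
    ← intervalIntegral.integral_add hint' (hint 0 R), ← intervalIntegral.integral_ofReal,
    ← intervalIntegral.integral_const_mul]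
  refine intervalIntegral.integral_congr fun k _ ↦ ?_
  simp only [hodd k, ofReal_neg, ofReal_cos, two_cos, mul_comm I, neg_mul, add_comm]

end General

section Airy

open Complex FourierTransform

/-- The integrand `e^{i(z³/3 + xz)}` of the Airy integral at `x`, as an entire function of `z`. -/
noncomputable def airyIntegrand (x : ℝ) (z : ℂ) : ℂ := cexp (I * (z ^ 3 / 3 + x * z))

/-- The Airy integrand on the horizontal line `Im z = s`, parametrized by `k = Re z`. For `s > 0`
it decays like a Gaussian, so integrals along this line converge absolutely. -/
noncomputable def airyLine (x s k : ℝ) : ℂ := airyIntegrand x (k + s * I)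

theorem differentiable_airyIntegrand (x : ℝ) : Differentiable ℂ (airyIntegrand x) := by
  unfold airyIntegrand; fun_prop

@[fun_prop]
theorem continuous_airyIntegrand (x : ℝ) : Continuous (airyIntegrand x) :=
  (differentiable_airyIntegrand x).continuous

@[fun_prop]
theorem continuous_airyLine (x s : ℝ) : Continuous (airyLine x s) := by
  unfold airyLine; fun_prop

theorem norm_airyLine (x s k : ℝ) :
    ‖airyLine x s k‖ = rexp (-s * k ^ 2) * rexp (s ^ 3 / 3 - x * s) := by
  have hre : (I * ((k + s * I) ^ 3 / 3 + x * (k + s * I))).re =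
      -s * k ^ 2 + (s ^ 3 / 3 - x * s) := by
    have hsplit : I * ((k + s * I) ^ 3 / 3 + x * (k + s * I)) =
        ((-s * k ^ 2 + (s ^ 3 / 3 - x * s) : ℝ) : ℂ) +
          ((k ^ 3 / 3 - k * s ^ 2 + x * k : ℝ) : ℂ) * I := by
      push_cast
      linear_combination (k ^ 2 * s + x * s + k * s ^ 2 * I + s ^ 3 / 3 * (I ^ 2 - 1)) * I_sq
    rw [hsplit, add_re, ofReal_re, re_ofReal_mul, I_re, mul_zero, add_zero]
  rw [airyLine, airyIntegrand, Complex.norm_exp, hre, Real.exp_add]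

theorem integrable_airyLine (x : ℝ) {s : ℝ} (hs : 0 < s) : Integrable (airyLine x s) :=
  ((integrable_exp_neg_mul_sq hs).mul_const (rexp (s ^ 3 / 3 - x * s))).mono'
    (continuous_airyLine x s).aestronglyMeasurable (ae_of_all _ fun k ↦ (norm_airyLine x s k).le)

theorem tendsto_integral_airyLine_vertical (x : ℝ) {a b : ℝ} (ha : 0 ≤ a) (hb : 0 ≤ b) :
    Tendsto (fun k ↦ ∫ s in a..b, airyLine x s k) (cocompact ℝ) (nhds 0) := by
  have hpos {s : ℝ} (hs : s ∈ Set.uIoc a b) : 0 < s := (le_min ha hb).trans_lt hs.1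
  have : IsCountablyGenerated (cocompact ℝ) := by
    rw [cocompact_eq_atBot_atTop]; infer_instance
  rw [← intervalIntegral.integral_zero (a := a) (b := b) (μ := volume)]
  refine intervalIntegral.tendsto_integral_filter_of_dominated_convergence
    (fun s ↦ rexp (s ^ 3 / 3 - x * s)) (.of_forall fun k ↦ ?_)
    (.of_forall fun k ↦ ae_of_all _ fun s hs ↦ ?_)
    (Continuous.intervalIntegrable (by fun_prop) _ _) (ae_of_all _ fun s hs ↦ ?_)
  · unfold airyLine
    exact Continuous.aestronglyMeasurable (by fun_prop)
  · rw [norm_airyLine]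
    exact mul_le_of_le_one_left (Real.exp_nonneg _)
      (Real.exp_le_one_iff.2 (by nlinarith [hpos hs, sq_nonneg k]))
  · have hsq : Tendsto (fun k : ℝ ↦ k ^ 2) (cocompact ℝ) atTop := by
      simpa only [Function.comp_def, Real.norm_eq_abs, sq_abs] using
        (tendsto_pow_atTop two_ne_zero).comp (tendsto_norm_cocompact_atTop (E := ℝ))
    have hexp := Real.tendsto_exp_atBot.comp
      (hsq.const_mul_atTop_of_neg (neg_neg_of_pos (hpos hs)))
    rw [tendsto_zero_iff_norm_tendsto_zero]
    simp_rw [norm_airyLine]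
    simpa using hexp.mul_const _

theorem tendsto_intervalIntegral_airyLine (x : ℝ) {a b : ℝ} (ha : 0 ≤ a) (hb : 0 < b) :
    Tendsto (fun R ↦ ∫ k in -R..R, airyLine x a k) atTop (nhds (∫ k, airyLine x b k)) := by
  have hvert := tendsto_integral_airyLine_vertical x ha hb.le
  have hleft := (hvert.comp (tendsto_neg_atTop_atBot.mono_right atBot_le_cocompact)).const_mul I
  have hright := (hvert.mono_left atTop_le_cocompact).const_mul I
  have hhoriz := intervalIntegral_tendsto_integral (integrable_airyLine x hb)
    tendsto_neg_atTop_atBot tendsto_id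
  have hsum := (hhoriz.sub hright).add hleft
  simp only [mul_zero, sub_zero, add_zero] at hsum
  refine hsum.congr fun R ↦ ?_
  have hrect := Complex.integral_boundary_rect_eq_zero_of_differentiableOn (airyIntegrand x)
    (-R + a * I) (R + b * I) (differentiable_airyIntegrand x).differentiableOn
  simp only [add_re, add_im, neg_re, neg_im, mul_re, mul_im, ofReal_re, ofReal_im, I_re, I_im,
    mul_zero, mul_one, neg_zero, add_zero, zero_add, sub_self, ofReal_neg, smul_eq_mul] at hrect
  simp only [airyLine, Function.comp, id]
  push_cast
  linear_combination -hrect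

theorem integral_airyLine_height_congr (x : ℝ) {a b : ℝ} (ha : 0 < a) (hb : 0 < b) :
    ∫ k, airyLine x a k = ∫ k, airyLine x b k :=
  tendsto_nhds_unique (tendsto_intervalIntegral_airyLine x ha.le ha)
    (tendsto_intervalIntegral_airyLine x ha.le hb)

theorem integral_airyLine_of_tendsto {x A : ℝ}
    (hA : Tendsto (fun R : ℝ ↦ 1 / π * ∫ k in (0 : ℝ)..R, Real.cos (k ^ 3 / 3 + x * k))
      atTop (nhds A)) {s : ℝ} (hs : 0 < s) :
    ∫ k, airyLine x s k = 2 * π * A := by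
  have hodd : (fun k : ℝ ↦ k ^ 3 / 3 + x * k).Odd := fun k ↦ by ring
  have hsymm (R : ℝ) : ∫ k in -R..R, airyLine x 0 k =
      2 * ((∫ k in (0 : ℝ)..R, Real.cos (k ^ 3 / 3 + x * k) : ℝ) : ℂ) := by
    rw [← integral_cexp_I_mul_of_odd (by fun_prop) hodd]
    simp [airyLine, airyIntegrand]
  refine tendsto_nhds_unique (tendsto_intervalIntegral_airyLine x le_rfl hs) ?_
  refine (((continuous_ofReal.tendsto A).comp hA).const_mul (2 * π : ℂ)).congr fun R ↦ ?_
  have hπ : (π : ℂ) ≠ 0 := ofReal_ne_zero.2 pi_ne_zero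
  rw [hsymm, Function.comp]
  push_cast
  field_simp

theorem fourier_airyLine (x s w : ℝ) :
    𝓕 (airyLine x s) w = cexp (-(2 * π * w * s)) * ∫ k, airyLine (x - 2 * π * w) s k := by
  rw [fourier_real_eq_integral_exp_smul, ← integral_const_mul]
  congr 1 with k
  simp only [airyLine, airyIntegrand, smul_eq_mul, ← Complex.exp_add]
  congr 1
  push_cast
  linear_combination (2 * π * w * s) * I_sq

theorem fourier_airyLine_shift (x : ℝ) {a b : ℝ} (ha : 0 < a) (hb : 0 < b) (w : ℝ) :
    𝓕 (airyLine x a) w = cexp (2 * π * (b - a) * w) * 𝓕 (airyLine x b) w := by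
  rw [fourier_airyLine, fourier_airyLine, integral_airyLine_height_congr _ ha hb, ← mul_assoc,
    ← Complex.exp_add]
  ring_nf

theorem norm_fourier_airyLine_le (x : ℝ) {a b : ℝ} (ha : 0 < a) (hb : 0 < b) (w : ℝ) :
    ‖𝓕 (airyLine x a) w‖ ≤ (∫ k, ‖airyLine x b k‖) * rexp (2 * π * (b - a) * w) := by
  have hexp : ‖cexp (2 * π * (b - a) * w)‖ = rexp (2 * π * (b - a) * w) := by
    exact_mod_cast Complex.norm_exp_ofReal (2 * π * (b - a) * w)
  rw [fourier_airyLine_shift x ha hb, norm_mul, hexp, mul_comm]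
  gcongr
  exact VectorFourier.norm_fourierIntegral_le_integral_norm _ _ _ _ _

theorem integrable_fourier_airyLine (x : ℝ) {s : ℝ} (hs : 0 < s) :
    Integrable (𝓕 (airyLine x s)) := by
  have hcont : Continuous (𝓕 (airyLine x s)) :=
    VectorFourier.fourierIntegral_continuous continuous_fourierChar continuous_inner
      (integrable_airyLine x hs)
  have hdown : 2 * π * (s / 2 - s) < 0 := by nlinarith [pi_pos]
  have hup : 0 < 2 * π * (2 * s - s) := by nlinarith [pi_pos]
  exact integrable_of_norm_le_exp hcont.aestronglyMeasurable hdown hup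
    (fun w _ ↦ norm_fourier_airyLine_le x hs (half_pos hs) w)
    (fun w _ ↦ norm_fourier_airyLine_le x hs (by positivity) w)

theorem parseval_airyLine (x y : ℝ) {s : ℝ} (hs : 0 < s) :
    ∫ l : ℝ, (∫ k, airyLine (x - l) s k) * (∫ k, airyLine (y - l) s k) * cexp (-(2 * s * l)) =
      2 * π * ∫ k, airyLine x s k * airyLine y s (-k) := by
  have hscale := Measure.integral_comp_mul_left (fun l : ℝ ↦
    (∫ k, airyLine (x - l) s k) * (∫ k, airyLine (y - l) s k) * cexp (-(2 * s * l))) (2 * π)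
  have hfourier (w : ℝ) : 𝓕 (airyLine x s) w * 𝓕 (airyLine y s) w =
      (∫ k, airyLine (x - 2 * π * w) s k) * (∫ k, airyLine (y - 2 * π * w) s k) *
        cexp (-(2 * s * (2 * π * w : ℝ))) := by
    rw [fourier_airyLine, fourier_airyLine, mul_mul_mul_comm, ← Complex.exp_add, mul_comm]
    push_cast
    ring_nf
  have hπ : (π : ℂ) ≠ 0 := ofReal_ne_zero.2 pi_ne_zero
  rw [← integral_fourier_mul_fourier (integrable_airyLine x hs) (integrable_airyLine y hs)
    (continuous_airyLine y s) (integrable_fourier_airyLine y hs), integral_congr_ae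
    (ae_of_all _ hfourier), hscale, abs_of_pos (by positivity), real_smul]
  push_cast
  field_simp

theorem airyLine_mul_airyLine_neg (x y s k : ℝ) :
    airyLine x s k * airyLine y s (-k) =
      cexp (-(2 * s) * k ^ 2 + I * (x - y) * k + (2 * s ^ 3 / 3 - s * (x + y))) := by
  simp only [airyLine, airyIntegrand, ← Complex.exp_add]
  congr 1
  push_cast
  linear_combination (2 * k ^ 2 * s + (x + y) * s + 2 * s ^ 3 / 3 * (I ^ 2 - 1)) * I_sq

theorem integral_airyLine_mul_airyLine_neg (x y : ℝ) {t : ℝ} (ht : 0 < t) :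
    ∫ k, airyLine x (t / 2) k * airyLine y (t / 2) (-k) =
      ((√(π / t) * rexp (-(x - y) ^ 2 / (4 * t) - t * (x + y) / 2 + t ^ 3 / 12) : ℝ) : ℂ) := by
  have ht' : (t : ℂ) ≠ 0 := ofReal_ne_zero.2 ht.ne'
  have hsqrt : ((√(π / t) : ℝ) : ℂ) = (π / t : ℂ) ^ (1 / 2 : ℂ) := by
    rw [Real.sqrt_eq_rpow, ofReal_cpow (by positivity)]
    push_cast
    rfl
  have hb : -(2 * ((t / 2 : ℝ) : ℂ)) = -t := by push_cast; ring
  simp_rw [airyLine_mul_airyLine_neg, hb]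
  rw [integral_cexp_quadratic (by simpa using ht), neg_neg, mul_pow, I_sq, ofReal_mul, hsqrt]
  push_cast
  congr 2
  field_simp
  ring

end Airy

/-- Heat semigroup of the Airy Hamiltonian: if `Ai` is the Airy function,
defined by `Ai(x) = (1/π) ∫₀^∞ cos(k³/3 + xk) dk` as an improper integral, then
`∫ Ai(x-λ)Ai(y-λ)e^{-λt} dλ = (4πt)^{-1/2} exp(-(x-y)²/(4t) - t(x+y)/2 + t³/12)`. -/
theorem airy_heat_semigroup (Ai : ℝ → ℝ)
    (hAi : ∀ x : ℝ, Tendsto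
      (fun R : ℝ => (1 / π) * ∫ k in (0 : ℝ)..R, Real.cos (k ^ 3 / 3 + x * k))
      atTop (nhds (Ai x)))
    (t : ℝ) (ht : 0 < t) (x y : ℝ) :
    ∫ lam : ℝ, Ai (x - lam) * Ai (y - lam) * Real.exp (-lam * t) =
      (Real.sqrt (4 * π * t))⁻¹ *
        Real.exp (-(x - y) ^ 2 / (4 * t) - t * (x + y) / 2 + t ^ 3 / 12) := by
  have hline (z : ℝ) : ∫ k, airyLine z (t / 2) k = 2 * π * Ai z :=
    integral_airyLine_of_tendsto (hAi z) (half_pos ht)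
  have hπ : (π : ℂ) ≠ 0 := Complex.ofReal_ne_zero.2 pi_ne_zero
  apply Complex.ofReal_injective
  calc ((∫ l : ℝ, Ai (x - l) * Ai (y - l) * rexp (-l * t) : ℝ) : ℂ)
      = ((2 * π : ℂ) ^ 2)⁻¹ * ∫ l : ℝ, (∫ k, airyLine (x - l) (t / 2) k) *
          (∫ k, airyLine (y - l) (t / 2) k) * Complex.exp (-(2 * (t / 2 : ℝ) * l)) := by
        rw [← integral_complex_ofReal, ← integral_const_mul]
        congr 1 with l
        rw [hline, hline]
        push_cast
        field_simp
    _ = (2 * π : ℂ)⁻¹ * ∫ k, airyLine x (t / 2) k * airyLine y (t / 2) (-k) := by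
        rw [parseval_airyLine x y (half_pos ht)]
        field_simp
    _ = _ := by
        rw [integral_airyLine_mul_airyLine_neg x y ht, sqrt_pi_div]
        push_cast
        field_simp
end
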